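/- Let K ≥ 2, τ > 0, and β ∈ ℝ^K with all β_i > 0, and let X have the Concrete distribution C(β, τ). Then for all indices i, j, k, l, the log-ratio covariance satisfies Cov[log(X_i/X_k), log(X_j/X_l)] = (π²/(6τ²))(δ_{ij} − δ_{il} − δ_{jk} + δ_{kl}), where δ is the Kronecker delta. -/

import Mathlib

open MeasureTheory Finset

noncomputable def fillMap (K : ℕ) (u : Fin (K - 1) → ℝ) : Fin K → ℝ :=
  fun i => if h : (i : ℕ) < K - 1 then u ⟨i, h⟩ else 1 - ∑ j, u j

/-- The `(K-1)`-dimensional Lebesgue measure on the probability simplex `S_K`. -/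
noncomputable def simplexMeasure (K : ℕ) : Measure (Fin K → ℝ) :=
  Measure.map (fillMap K)
    (volume.restrict {u : Fin (K - 1) → ℝ | (∀ j, 0 ≤ u j) ∧ ∑ j, u j ≤ 1})

/-- The density of the Concrete distribution `C(β, τ)` on the simplex. -/
noncomputable def concreteDensity (K : ℕ) (β : Fin K → ℝ) (τ : ℝ) (x : Fin K → ℝ) : ℝ :=
  (Nat.factorial (K - 1) : ℝ) * τ ^ (K - 1) * (∑ j, β j / x j ^ τ) ^ (-(K : ℝ)) *
    ∏ i, β i / x i ^ (τ + 1)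

/-- Kronecker delta. -/
def kd {K : ℕ} (a b : Fin K) : ℝ := if a = b then 1 else 0

/-!
If `W_1, …, W_K` are independent Gumbel variables with locations `(log β_i) / τ` and scale `1 / τ`,
then `X = softmax W` has the Concrete distribution: `softmax` is invariant under the diagonal
shift `w ↦ w + s`, integrating the product of the Gumbel densities over `s` is a Gamma integral,
and the remaining coordinates are carried to the simplex by the additive logistic map, whose
Jacobian determinant at the point sent to `x` is `∏ x_i`. Since
`log (X_i / X_k) = W_i - W_k`, the covariance reduces by bilinearity and independence to
`Var W_i`.

The moment generating function of `W_i` is `β_i ^ (t / τ) Γ(1 - t / τ)`. The reflection formula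
for `Γ` turns the cumulant generating function `κ` into
`κ(t) + κ(-t) = -log (sinc (π t / τ))`, and comparing second derivatives at `0` gives
`Var W_i = π² / (6 τ²)`.
-/

section

open ProbabilityTheory
open scoped ENNReal Topology Matrix

theorem iteratedDeriv_dslope_self {𝕜 : Type*} [NontriviallyNormedField 𝕜] [CompleteSpace 𝕜]
    [CharZero 𝕜] {f : 𝕜 → 𝕜} {a : 𝕜} (hf : AnalyticAt 𝕜 f a) (n : ℕ) :
    iteratedDeriv n (dslope f a) a = iteratedDeriv (n + 1) f a / (n + 1) := by
  have hslope := hf.hasFPowerSeriesAt.has_fpower_series_dslope_fslope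
  have hcoeff := congrArg (·.coeff n)
    (hslope.analyticAt.hasFPowerSeriesAt.eq_formalMultilinearSeries hslope)
  simp only [FormalMultilinearSeries.coeff_fslope, FormalMultilinearSeries.coeff_ofScalars,
    Nat.factorial_succ, Nat.cast_mul, Nat.cast_succ] at hcoeff
  have hfact : (n.factorial : 𝕜) ≠ 0 := Nat.cast_ne_zero.mpr n.factorial_ne_zero
  have hsucc : (n + 1 : 𝕜) ≠ 0 := Nat.cast_add_one_ne_zero n
  field_simp at hcoeff ⊢
  linear_combination hcoeff

theorem iteratedDeriv_comp_mul_left {𝕜 F : Type*} [NontriviallyNormedField 𝕜]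
    [NormedAddCommGroup F] [NormedSpace 𝕜 F] (n : ℕ) (f : 𝕜 → F) (c : 𝕜) :
    iteratedDeriv n (fun x ↦ f (c * x)) = fun x ↦ c ^ n • iteratedDeriv n f (c * x) := by
  induction n with
  | zero => simp
  | succ n ih =>
    funext x
    rw [iteratedDeriv_succ, ih, deriv_fun_const_smul_field, deriv_comp_mul_left, smul_smul,
      ← pow_succ, iteratedDeriv_succ]

theorem iteratedDeriv_two_log_comp {f : ℝ → ℝ} {x : ℝ} (hf : ContDiffAt ℝ 2 f x) (hx : f x ≠ 0) :
    iteratedDeriv 2 (fun y ↦ Real.log (f y)) x =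
      iteratedDeriv 2 f x / f x - (deriv f x / f x) ^ 2 := by
  have hlog : iteratedDeriv 2 Real.log (f x) = -((f x) ^ 2)⁻¹ := by
    simp [iteratedDeriv_succ]
  have hcomp := iteratedDeriv_comp_two (Real.contDiffAt_log.mpr hx) hf
  simp only [hlog, Real.deriv_log] at hcomp
  refine hcomp.trans ?_
  field_simp
  ring

theorem analyticAt_sinc_zero : AnalyticAt ℝ Real.sinc 0 := by
  rw [Real.sinc_eq_dslope]
  exact ⟨_, Real.analyticAt_sin.hasFPowerSeriesAt.has_fpower_series_dslope_fslope⟩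

theorem iteratedDeriv_two_log_sinc_zero :
    iteratedDeriv 2 (fun x ↦ Real.log (Real.sinc x)) 0 = -1 / 3 := by
  have hderiv : deriv Real.sinc 0 = 0 := by
    rw [← iteratedDeriv_one, Real.sinc_eq_dslope, iteratedDeriv_dslope_self Real.analyticAt_sin]
    simp [iteratedDeriv_succ]
  rw [iteratedDeriv_two_log_comp analyticAt_sinc_zero.contDiffAt (by simp), hderiv,
    Real.sinc_eq_dslope, iteratedDeriv_dslope_self Real.analyticAt_sin]
  have hsin : iteratedDeriv 3 Real.sin 0 = -1 := by simp [iteratedDeriv_succ]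
  norm_num [hsin]

theorem Gamma_one_add_mul_Gamma_one_sub_mul_sinc {s : ℝ} (hs : |s| < 1) :
    Real.Gamma (1 + s) * Real.Gamma (1 - s) * Real.sinc (Real.pi * s) = 1 := by
  obtain rfl | hs0 := eq_or_ne s 0
  · simp
  obtain ⟨hlt, hgt⟩ := abs_lt.mp hs
  have hpi := Real.pi_pos
  have hsin : Real.sin (Real.pi * s) ≠ 0 := fun h ↦
    mul_ne_zero hpi.ne' hs0 <|
      (Real.sin_eq_zero_iff_of_lt_of_lt (by nlinarith) (by nlinarith)).mp h
  rw [add_comm, Real.Gamma_add_one hs0, mul_assoc s, Real.Gamma_mul_Gamma_one_sub,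
    Real.sinc_of_ne_zero (mul_ne_zero hpi.ne' hs0)]
  field_simp
  exact div_self (mul_comm Real.pi s ▸ hsin)

theorem integral_exp_mul_sub_mul_exp {a r : ℝ} (ha : 0 < a) (hr : 0 < r) :
    ∫ y, Real.exp (a * y - r * Real.exp y) = (1 / r) ^ a * Real.Gamma a := by
  rw [← Real.integral_rpow_mul_exp_neg_mul_Ioi ha hr, ← Real.range_exp, ← Set.image_univ,
    integral_image_eq_integral_abs_deriv_smul MeasurableSet.univ
      (fun y _ ↦ (Real.hasDerivAt_exp y).hasDerivWithinAt) Real.exp_injective.injOn,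
    Measure.restrict_univ]
  congr with y
  rw [abs_of_pos (Real.exp_pos y), smul_eq_mul, ← Real.exp_mul, ← Real.exp_add, ← Real.exp_add]
  ring_nf

theorem integral_mul_exp_neg_mul_sub_mul_exp_neg_mul {τ a r : ℝ} (hτ : 0 < τ) (ha : 0 < a)
    (hr : 0 < r) :
    ∫ x, τ * Real.exp (a * (-τ * x) - r * Real.exp (-τ * x)) = (1 / r) ^ a * Real.Gamma a := by
  rw [integral_const_mul,
    Measure.integral_comp_mul_left (fun y ↦ Real.exp (a * y - r * Real.exp y)) (-τ),
    integral_exp_mul_sub_mul_exp ha hr, abs_inv, abs_neg, abs_of_pos hτ, smul_eq_mul,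
    mul_inv_cancel_left₀ hτ.ne']

/-- The density of the Gumbel distribution with location `log b / τ` and scale `1 / τ`: if `W` has
this law, then `exp (-τ W)` is exponential with rate `b`. -/
noncomputable def gumbelPDFReal (b τ x : ℝ) : ℝ :=
  b * (τ * Real.exp (-τ * x - b * Real.exp (-τ * x)))

theorem gumbelPDFReal_nonneg {b τ : ℝ} (hb : 0 ≤ b) (hτ : 0 ≤ τ) (x : ℝ) :
    0 ≤ gumbelPDFReal b τ x := by
  unfold gumbelPDFReal
  positivity

@[fun_prop]
theorem continuous_gumbelPDFReal (b τ : ℝ) : Continuous (gumbelPDFReal b τ) := by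
  unfold gumbelPDFReal
  fun_prop

theorem integral_gumbelPDFReal_mul_exp {b τ t : ℝ} (hb : 0 < b) (hτ : 0 < τ) (ht : t < τ) :
    ∫ x, gumbelPDFReal b τ x * Real.exp (t * x) = b ^ (t / τ) * Real.Gamma (1 - t / τ) := by
  have ha : 0 < 1 - t / τ := sub_pos.mpr ((div_lt_one hτ).mpr ht)
  have hpdf (x : ℝ) : gumbelPDFReal b τ x * Real.exp (t * x) =
      b * (τ * Real.exp ((1 - t / τ) * (-τ * x) - b * Real.exp (-τ * x))) := by
    rw [gumbelPDFReal, mul_assoc, mul_assoc, ← Real.exp_add]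
    congr 3
    field_simp
    ring
  simp_rw [hpdf]
  rw [integral_const_mul, integral_mul_exp_neg_mul_sub_mul_exp_neg_mul hτ ha hb, ← mul_assoc,
    one_div, Real.inv_rpow hb.le, ← Real.rpow_neg hb.le, neg_sub, Real.rpow_sub_one hb.ne',
    mul_div_cancel₀ _ hb.ne']

theorem integral_gumbelPDFReal {b τ : ℝ} (hb : 0 < b) (hτ : 0 < τ) :
    ∫ x, gumbelPDFReal b τ x = 1 := by
  simpa using integral_gumbelPDFReal_mul_exp hb hτ hτ

theorem integrable_gumbelPDFReal {b τ : ℝ} (hb : 0 < b) (hτ : 0 < τ) :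
    Integrable (gumbelPDFReal b τ) :=
  integrable_of_integral_eq_one (integral_gumbelPDFReal hb hτ)

/-- The Gumbel distribution with location `log b / τ` and scale `1 / τ`. -/
noncomputable def gumbelMeasure (b τ : ℝ) : Measure ℝ :=
  volume.withDensity fun x ↦ ENNReal.ofReal (gumbelPDFReal b τ x)

theorem isProbabilityMeasure_gumbelMeasure {b τ : ℝ} (hb : 0 < b) (hτ : 0 < τ) :
    IsProbabilityMeasure (gumbelMeasure b τ) where
  measure_univ := by
    rw [gumbelMeasure, withDensity_apply _ MeasurableSet.univ, Measure.restrict_univ,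
      ← ofReal_integral_eq_lintegral_ofReal (integrable_gumbelPDFReal hb hτ)
        (ae_of_all _ (gumbelPDFReal_nonneg hb.le hτ.le)), integral_gumbelPDFReal hb hτ,
      ENNReal.ofReal_one]

theorem mgf_gumbelMeasure {b τ t : ℝ} (hb : 0 < b) (hτ : 0 < τ) (ht : t < τ) :
    mgf id (gumbelMeasure b τ) t = b ^ (t / τ) * Real.Gamma (1 - t / τ) := by
  rw [mgf, gumbelMeasure, integral_withDensity_eq_integral_toReal_smul (by fun_prop) (by simp),
    ← integral_gumbelPDFReal_mul_exp hb hτ ht]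
  simp only [ENNReal.toReal_ofReal (gumbelPDFReal_nonneg hb.le hτ.le _), smul_eq_mul, id]

theorem mgf_gumbelMeasure_pos {b τ t : ℝ} (hb : 0 < b) (hτ : 0 < τ) (ht : t < τ) :
    0 < mgf id (gumbelMeasure b τ) t := by
  rw [mgf_gumbelMeasure hb hτ ht]
  exact mul_pos (Real.rpow_pos_of_pos hb _)
    (Real.Gamma_pos_of_pos (sub_pos.mpr ((div_lt_one hτ).mpr ht)))

theorem Iio_subset_integrableExpSet_gumbelMeasure {b τ : ℝ} (hb : 0 < b) (hτ : 0 < τ) :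
    Set.Iio τ ⊆ integrableExpSet id (gumbelMeasure b τ) := fun _ ht ↦
  Integrable.of_integral_ne_zero (mgf_gumbelMeasure_pos hb hτ ht).ne'

theorem zero_mem_interior_integrableExpSet_gumbelMeasure {b τ : ℝ} (hb : 0 < b) (hτ : 0 < τ) :
    0 ∈ interior (integrableExpSet id (gumbelMeasure b τ)) :=
  interior_maximal (Iio_subset_integrableExpSet_gumbelMeasure hb hτ) isOpen_Iio hτ

theorem memLp_id_gumbelMeasure {b τ : ℝ} (hb : 0 < b) (hτ : 0 < τ) (p : NNReal) :
    MemLp id p (gumbelMeasure b τ) :=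
  memLp_of_mem_interior_integrableExpSet (zero_mem_interior_integrableExpSet_gumbelMeasure hb hτ) p

theorem cgf_gumbelMeasure_add_cgf_neg {b τ t : ℝ} (hb : 0 < b) (hτ : 0 < τ) (ht : |t| < τ) :
    cgf id (gumbelMeasure b τ) t + cgf id (gumbelMeasure b τ) (-t) =
      -Real.log (Real.sinc (Real.pi / τ * t)) := by
  obtain ⟨hlt, hgt⟩ := abs_lt.mp ht
  have hreflect : mgf id (gumbelMeasure b τ) t * mgf id (gumbelMeasure b τ) (-t) *
      Real.sinc (Real.pi / τ * t) = 1 := by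
    rw [mgf_gumbelMeasure hb hτ hgt, mgf_gumbelMeasure hb hτ (neg_lt.mp hlt), neg_div,
      Real.rpow_neg hb.le, sub_neg_eq_add, div_mul_eq_mul_div,
      mul_div_assoc]
    have hΓ := Gamma_one_add_mul_Gamma_one_sub_mul_sinc (s := t / τ)
      (by rwa [abs_div, abs_of_pos hτ, div_lt_one hτ])
    have hpow := mul_inv_cancel₀ (Real.rpow_pos_of_pos hb (t / τ)).ne'
    linear_combination b ^ (t / τ) * (b ^ (t / τ))⁻¹ * hΓ + hpow
  rw [cgf, cgf, ← Real.log_mul (mgf_gumbelMeasure_pos hb hτ hgt).ne'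
      (mgf_gumbelMeasure_pos hb hτ (neg_lt.mp hlt)).ne', eq_inv_of_mul_eq_one_left hreflect,
    Real.log_inv]

theorem iteratedDeriv_two_cgf_add_cgf_neg {Ω : Type*} {mΩ : MeasurableSpace Ω} {μ : Measure Ω}
    [IsProbabilityMeasure μ] {X : Ω → ℝ} (h : 0 ∈ interior (integrableExpSet X μ)) :
    iteratedDeriv 2 (fun t ↦ cgf X μ t + cgf X μ (-t)) 0 = 2 * Var[X; μ] := by
  have hcgf : ContDiffAt ℝ 2 (cgf X μ) 0 := (analyticAt_cgf h).contDiffAt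
  have hcgf_neg : ContDiffAt ℝ 2 (fun t ↦ cgf X μ (-t)) 0 :=
    ContDiffAt.comp (g := cgf X μ) 0 (by rwa [neg_zero]) contDiffAt_id.neg
  have hvar : iteratedDeriv 2 (cgf X μ) 0 = Var[X; μ] := by
    simpa using (variance_tilted_mul h).symm
  rw [iteratedDeriv_fun_add hcgf hcgf_neg, iteratedDeriv_comp_neg, neg_zero, neg_one_sq, one_smul,
    hvar, two_mul]

theorem variance_id_gumbelMeasure {b τ : ℝ} (hb : 0 < b) (hτ : 0 < τ) :
    Var[id; gumbelMeasure b τ] = Real.pi ^ 2 / (6 * τ ^ 2) := by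
  have := isProbabilityMeasure_gumbelMeasure hb hτ
  have hsinc : (fun t ↦ cgf id (gumbelMeasure b τ) t + cgf id (gumbelMeasure b τ) (-t)) =ᶠ[𝓝 0]
      fun t ↦ -Real.log (Real.sinc (Real.pi / τ * t)) := by
    filter_upwards [Metric.ball_mem_nhds 0 hτ] with t ht
    exact cgf_gumbelMeasure_add_cgf_neg hb hτ (by simpa using ht)
  have htwo := iteratedDeriv_two_cgf_add_cgf_neg
    (zero_mem_interior_integrableExpSet_gumbelMeasure hb hτ)
  rw [hsinc.iteratedDeriv_eq, iteratedDeriv_fun_neg,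
    iteratedDeriv_comp_mul_left 2 fun x ↦ Real.log (Real.sinc x)] at htwo
  simp only [mul_zero, iteratedDeriv_two_log_sinc_zero, smul_eq_mul] at htwo
  field_simp at htwo ⊢
  linear_combination -htwo

theorem pi_withDensity_ofReal {ι E : Type*} [Fintype ι] [MeasurableSpace E]
    {μ : ι → Measure E} [∀ i, SigmaFinite (μ i)] {f : ι → E → ℝ}
    (hf : ∀ i, Integrable (f i) (μ i)) (hf0 : ∀ i x, 0 ≤ f i x) :
    Measure.pi (fun i ↦ (μ i).withDensity fun x ↦ ENNReal.ofReal (f i x)) =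
      (Measure.pi μ).withDensity fun w ↦ ENNReal.ofReal (∏ i, f i (w i)) := by
  have (i : ι) := isFiniteMeasure_withDensity_ofReal (hf i).2
  refine Measure.pi_eq fun s hs ↦ ?_
  rw [withDensity_apply _ (MeasurableSet.univ_pi hs), Measure.restrict_pi_pi,
    ← ofReal_integral_eq_lintegral_ofReal (Integrable.fintype_prod fun i ↦ (hf i).restrict)
      (ae_of_all _ fun w ↦ prod_nonneg fun i _ ↦ hf0 i (w i)),
    integral_fintype_prod_eq_prod, ENNReal.ofReal_prod_of_nonneg
      fun i _ ↦ integral_nonneg (hf0 i)]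
  refine prod_congr rfl fun i _ ↦ ?_
  rw [withDensity_apply _ (hs i),
    ofReal_integral_eq_lintegral_ofReal (hf i).restrict (ae_of_all _ (hf0 i))]

theorem memLp_eval_pi {ι : Type*} [Fintype ι] {E : ι → Type*}
    [∀ i, MeasurableSpace (E i)] [∀ i, NormedAddCommGroup (E i)] {μ : ∀ i, Measure (E i)}
    [∀ i, IsProbabilityMeasure (μ i)] {p : ℝ≥0∞} {i : ι} (hμ : MemLp id p (μ i)) :
    MemLp (fun w : ∀ i, E i ↦ w i) p (Measure.pi μ) :=
  hμ.comp_measurePreserving (measurePreserving_eval μ i)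

theorem covariance_eval_pi {ι : Type*} [Fintype ι] [DecidableEq ι] {μ : ι → Measure ℝ}
    [∀ i, IsProbabilityMeasure (μ i)] (hμ : ∀ i, MemLp id 2 (μ i)) (i j : ι) :
    cov[fun w ↦ w i, fun w ↦ w j; Measure.pi μ] = if i = j then Var[id; μ i] else 0 := by
  split_ifs with hij
  · subst hij
    rw [covariance_self (measurable_pi_apply i).aemeasurable,
      ← (measurePreserving_eval μ i).map_eq,
      variance_map aemeasurable_id (measurable_pi_apply i).aemeasurable]
    rfl
  · have hindep := iIndepFun_pi (μ := μ) (X := fun _ ↦ id) fun _ ↦ aemeasurable_id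
    exact (hindep.indepFun hij).covariance_eq_zero (memLp_eval_pi (hμ i)) (memLp_eval_pi (hμ j))

section Softmax

variable {ι : Type*} [Fintype ι]

/-- The normalised exponential `exp wᵢ / ∑ⱼ exp wⱼ`, which turns independent Gumbel variables into
a Concrete random vector. -/
noncomputable def softmax (w : ι → ℝ) (i : ι) : ℝ :=
  Real.exp (w i) / ∑ j, Real.exp (w j)

theorem sum_exp_pos [Nonempty ι] (w : ι → ℝ) : 0 < ∑ j, Real.exp (w j) :=
  sum_pos (fun j _ ↦ Real.exp_pos (w j)) univ_nonempty

theorem softmax_pos (w : ι → ℝ) (i : ι) : 0 < softmax w i :=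
  have : Nonempty ι := ⟨i⟩
  div_pos (Real.exp_pos _) (sum_exp_pos w)

theorem softmax_add_const (w : ι → ℝ) (c : ℝ) : softmax (fun i ↦ w i + c) = softmax w := by
  ext i
  simp only [softmax, Real.exp_add, ← sum_mul]
  exact mul_div_mul_right _ _ (Real.exp_pos c).ne'

theorem log_softmax_div_softmax (w : ι → ℝ) (i j : ι) :
    Real.log (softmax w i / softmax w j) = w i - w j := by
  have : Nonempty ι := ⟨i⟩
  rw [softmax, softmax, div_div_div_cancel_right₀ (sum_exp_pos w).ne', ← Real.exp_sub,
    Real.log_exp]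

theorem measurable_softmax : Measurable (softmax : (ι → ℝ) → ι → ℝ) := by
  unfold softmax
  fun_prop

end Softmax

section AdditiveLogistic

variable {ι : Type*} [Fintype ι]

/-- The additive logistic map, a diffeomorphism of `ℝ^ι` onto the open solid simplex
`{u | 0 < u, ∑ u < 1}`; it is `softmax` with an extra coordinate `0`, which is then dropped. -/
noncomputable def additiveLogistic (v : ι → ℝ) (i : ι) : ℝ :=
  Real.exp (v i) / (1 + ∑ j, Real.exp (v j))

theorem one_add_sum_exp_pos (v : ι → ℝ) : 0 < 1 + ∑ j, Real.exp (v j) := by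
  positivity

theorem one_sub_sum_additiveLogistic (v : ι → ℝ) :
    1 - ∑ i, additiveLogistic v i = 1 / (1 + ∑ j, Real.exp (v j)) := by
  simp only [additiveLogistic, ← sum_div]
  rw [one_sub_div (one_add_sum_exp_pos v).ne', add_sub_cancel_right]

theorem log_additiveLogistic_div_one_sub_sum (v : ι → ℝ) (i : ι) :
    Real.log (additiveLogistic v i / (1 - ∑ j, additiveLogistic v j)) = v i := by
  rw [one_sub_sum_additiveLogistic, additiveLogistic,
    div_div_div_cancel_right₀ (one_add_sum_exp_pos v).ne', div_one, Real.log_exp]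

theorem injective_additiveLogistic :
    Function.Injective (additiveLogistic : (ι → ℝ) → ι → ℝ) :=
  Function.LeftInverse.injective (g := fun u i ↦ Real.log (u i / (1 - ∑ j, u j)))
    fun v ↦ funext (log_additiveLogistic_div_one_sub_sum v)

theorem range_additiveLogistic :
    Set.range (additiveLogistic : (ι → ℝ) → ι → ℝ) = {u | (∀ j, 0 < u j) ∧ ∑ j, u j < 1} := by
  ext u
  constructor
  · rintro ⟨v, rfl⟩
    have hlast : 0 < 1 - ∑ i, additiveLogistic v i := by
      rw [one_sub_sum_additiveLogistic]
      exact one_div_pos.mpr (one_add_sum_exp_pos v)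
    exact ⟨fun j ↦ div_pos (Real.exp_pos _) (one_add_sum_exp_pos v), sub_pos.mp hlast⟩
  · rintro ⟨hpos, hsum⟩
    have hlast : 0 < 1 - ∑ j, u j := sub_pos.mpr hsum
    refine ⟨fun i ↦ Real.log (u i / (1 - ∑ j, u j)), funext fun i ↦ ?_⟩
    simp only [additiveLogistic, Real.exp_log (div_pos (hpos _) hlast), ← sum_div]
    rw [one_add_div hlast.ne', sub_add_cancel, div_div_div_cancel_right₀ hlast.ne', div_one]

theorem measurable_additiveLogistic : Measurable (additiveLogistic : (ι → ℝ) → ι → ℝ) := by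
  unfold additiveLogistic
  fun_prop

theorem det_diagonal_sub_vecMulVec {R : Type*} [CommRing R] [DecidableEq ι] (p q : ι → R) :
    (Matrix.diagonal p - Matrix.vecMulVec p q).det = (∏ i, p i) * (1 - ∑ i, q i) := by
  have hfactor : Matrix.diagonal p - Matrix.vecMulVec p q =
      Matrix.diagonal p * (1 - Matrix.vecMulVec 1 q) := by
    have hmulVec : Matrix.diagonal p *ᵥ 1 = p := by
      ext i
      rw [Matrix.mulVec_diagonal, Pi.one_apply, mul_one]
    rw [mul_sub, mul_one, Matrix.mul_vecMulVec, hmulVec]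
  rw [hfactor, Matrix.det_mul, Matrix.det_diagonal, Matrix.vecMulVec_eq Unit,
    Matrix.det_one_sub_mul_comm]
  simp [Matrix.mul_apply]

theorem hasFDerivAt_additiveLogistic [DecidableEq ι] (v : ι → ℝ) :
    HasFDerivAt additiveLogistic (Matrix.toLin' (Matrix.diagonal (additiveLogistic v) -
      Matrix.vecMulVec (additiveLogistic v) (additiveLogistic v))).toContinuousLinearMap v := by
  refine hasFDerivAt_pi'.mpr fun i ↦ ?_
  have hexp_log (w : ι → ℝ) :
      additiveLogistic w i = Real.exp (w i - Real.log (1 + ∑ j, Real.exp (w j))) := by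
    rw [Real.exp_sub, Real.exp_log (one_add_sum_exp_pos w), additiveLogistic]
  have hexp (j : ι) : HasFDerivAt (fun w : ι → ℝ ↦ Real.exp (w j))
      (Real.exp (v j) • ContinuousLinearMap.proj (R := ℝ) (φ := fun _ ↦ ℝ) j) v :=
    (hasFDerivAt_apply j v).exp
  have hlogit := (hasFDerivAt_apply (𝕜 := ℝ) (F' := fun _ ↦ ℝ) i v).fun_sub
    (((HasFDerivAt.fun_sum fun j (_ : j ∈ univ) ↦ hexp j).const_add 1).log
      (one_add_sum_exp_pos v).ne')
  simp only [hexp_log]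
  refine hlogit.exp.congr_fderiv (ContinuousLinearMap.ext fun w ↦ ?_)
  have hdot : additiveLogistic v ⬝ᵥ w =
      (1 + ∑ j, Real.exp (v j))⁻¹ * ∑ j, Real.exp (v j) * w j := by
    simp only [dotProduct, additiveLogistic, mul_sum, div_eq_inv_mul, mul_assoc]
  rw [← hexp_log]
  simp [Matrix.mulVec_diagonal, Matrix.vecMulVec_mulVec, hdot, mul_sub]

theorem volume_setOf_sum_eq {c : ℝ} (hc : c ≠ 0) : volume {u : ι → ℝ | ∑ i, u i = c} = 0 := by
  let s : AffineSubspace ℝ (ι → ℝ) := (affineSpan ℝ {c}).comap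
    (∑ i, LinearMap.proj (R := ℝ) (φ := fun _ ↦ ℝ) i).toAffineMap
  have hs : (s : Set (ι → ℝ)) = {u | ∑ i, u i = c} := by
    ext u
    simp [s]
  rw [← hs]
  refine Measure.addHaar_affineSubspace volume s fun htop ↦ hc.symm ?_
  have hzero : (0 : ι → ℝ) ∈ (s : Set (ι → ℝ)) := htop ▸ AffineSubspace.mem_top ℝ _ _
  rw [hs] at hzero
  simpa using hzero

theorem setOf_pos_and_sum_lt_ae_eq {c : ℝ} (hc : c ≠ 0) :
    {u : ι → ℝ | (∀ j, 0 < u j) ∧ ∑ j, u j < c} =ᵐ[volume]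
      {u | (∀ j, 0 ≤ u j) ∧ ∑ j, u j ≤ c} := by
  have hsum : ∀ᵐ u : ι → ℝ, ∑ j, u j ≠ c :=
    measure_eq_zero_iff_ae_notMem.mp (volume_setOf_sum_eq hc)
  have hcoord : ∀ᵐ u : ι → ℝ, ∀ j, u j ≠ 0 :=
    ae_all_iff.mpr fun j ↦
      measure_eq_zero_iff_ae_notMem.mp (Measure.pi_hyperplane (fun _ ↦ volume) j 0)
  filter_upwards [hsum, hcoord] with u hu hu0
  exact propext <| and_congr (forall_congr' fun j ↦ (hu0 j).symm.le_iff_lt.symm) hu.le_iff_lt.symm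

theorem map_additiveLogistic_withDensity :
    (volume.withDensity fun v : ι → ℝ ↦ ENNReal.ofReal
        ((∏ i, additiveLogistic v i) * (1 - ∑ i, additiveLogistic v i))).map additiveLogistic =
      volume.restrict {u | (∀ j, 0 ≤ u j) ∧ ∑ j, u j ≤ 1} := by
  classical
  have hpos (v : ι → ℝ) : (∀ i, 0 < additiveLogistic v i) ∧ ∑ i, additiveLogistic v i < 1 := by
    have hmem := Set.mem_range_self (f := additiveLogistic) v
    rwa [range_additiveLogistic] at hmem
  have hcov := map_withDensity_abs_det_fderiv_eq_addHaar volume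
    MeasurableSet.univ.nullMeasurableSet
    (fun v _ ↦ (hasFDerivAt_additiveLogistic v).hasFDerivWithinAt)
    (injective_additiveLogistic (ι := ι)).injOn
  rw [Set.image_univ, range_additiveLogistic, Measure.restrict_univ,
    Measure.restrict_congr_set (setOf_pos_and_sum_lt_ae_eq one_ne_zero)] at hcov
  rw [← hcov]
  congr with v
  rw [ContinuousLinearMap.det, LinearMap.coe_toContinuousLinearMap, LinearMap.det_toLin',
    det_diagonal_sub_vecMulVec, abs_of_nonneg]
  exact mul_nonneg (prod_nonneg fun i _ ↦ ((hpos v).1 i).le) (sub_nonneg.mpr (hpos v).2.le)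

end AdditiveLogistic

section Simplex

variable {n : ℕ}

theorem fillMap_additiveLogistic (v : Fin n → ℝ) :
    fillMap (n + 1) (additiveLogistic v) = softmax (Fin.snoc (α := fun _ ↦ ℝ) v 0) := by
  have hdenom : ∑ j, Real.exp (Fin.snoc (α := fun _ ↦ ℝ) v 0 j) = 1 + ∑ j, Real.exp (v j) := by
    simp [Fin.sum_univ_castSucc, add_comm]
  ext i
  rw [softmax, hdenom]
  cases i using Fin.lastCases with
  | last => simpa [fillMap] using one_sub_sum_additiveLogistic v
  | cast i => simp [fillMap, additiveLogistic]

theorem measurable_fillMap (K : ℕ) : Measurable (fillMap K) := by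
  refine measurable_pi_lambda _ fun i ↦ ?_
  unfold fillMap
  split_ifs <;> fun_prop

theorem measurable_softmax_snoc_zero :
    Measurable fun v : Fin n → ℝ ↦ softmax (Fin.snoc (α := fun _ ↦ ℝ) v 0) := by
  simp only [← fillMap_additiveLogistic]
  exact (measurable_fillMap _).comp measurable_additiveLogistic

theorem simplexMeasure_succ_eq_map_softmax :
    simplexMeasure (n + 1) =
      (volume.withDensity fun v : Fin n → ℝ ↦
        ENNReal.ofReal (∏ i, softmax (Fin.snoc (α := fun _ ↦ ℝ) v 0) i)).map
          fun v ↦ softmax (Fin.snoc (α := fun _ ↦ ℝ) v 0) := by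
  have hjac (v : Fin n → ℝ) : ∏ i, softmax (Fin.snoc (α := fun _ ↦ ℝ) v 0) i =
      (∏ i, additiveLogistic v i) * (1 - ∑ i, additiveLogistic v i) := by
    simp [← fillMap_additiveLogistic, Fin.prod_univ_castSucc, fillMap]
  simp only [hjac]
  simp only [← fillMap_additiveLogistic]
  have hcomp := Measure.map_map (μ := volume.withDensity fun v : Fin n → ℝ ↦ ENNReal.ofReal
    ((∏ i, additiveLogistic v i) * (1 - ∑ i, additiveLogistic v i)))
    (measurable_fillMap (n + 1)) measurable_additiveLogistic
  rw [map_additiveLogistic_withDensity] at hcomp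
  exact hcomp

theorem ae_pos_simplexMeasure_succ : ∀ᵐ x ∂simplexMeasure (n + 1), ∀ i, 0 < x i := by
  rw [simplexMeasure_succ_eq_map_softmax, ae_map_iff measurable_softmax_snoc_zero.aemeasurable
    (by measurability)]
  exact ae_of_all _ fun v ↦ softmax_pos _

theorem measurePreserving_snoc_zero_add : MeasurePreserving
    fun (p : (Fin n → ℝ) × ℝ) (i : Fin (n + 1)) ↦ Fin.snoc (α := fun _ ↦ ℝ) p.1 0 i + p.2 := by
  have hshear : MeasurePreserving (fun p : ℝ × (Fin n → ℝ) ↦ (p.1, p.2 + fun _ ↦ p.1)) :=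
    (MeasurePreserving.id volume).skew_product
      (g := fun (s : ℝ) (v : Fin n → ℝ) ↦ v + fun _ ↦ s) (by fun_prop)
      (ae_of_all _ fun s ↦ map_add_right_eq_self volume _)
  have hinsert :=
    (volume_preserving_piFinSuccAbove (fun _ : Fin (n + 1) ↦ ℝ) (Fin.last n)).symm
  have hswap : MeasurePreserving (Prod.swap : (Fin n → ℝ) × ℝ → ℝ × (Fin n → ℝ)) :=
    Measure.measurePreserving_swap
  convert (hinsert.comp hshear).comp hswap using 1
  ext p i
  cases i using Fin.lastCases <;> simp [MeasurableEquiv.piFinSuccAbove]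

theorem lintegral_eq_lintegral_snoc_zero_add {f : (Fin (n + 1) → ℝ) → ℝ≥0∞} (hf : Measurable f) :
    ∫⁻ w, f w = ∫⁻ v : Fin n → ℝ, ∫⁻ s : ℝ, f fun i ↦ Fin.snoc (α := fun _ ↦ ℝ) v 0 i + s := by
  rw [← measurePreserving_snoc_zero_add.lintegral_comp hf]
  exact lintegral_prod _ (hf.comp measurePreserving_snoc_zero_add.measurable).aemeasurable

end Simplex

section ConcreteDensity

variable {n : ℕ} {τ : ℝ}

theorem measurable_concreteDensity (K : ℕ) (β : Fin K → ℝ) (τ : ℝ) :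
    Measurable (concreteDensity K β τ) := by
  unfold concreteDensity
  fun_prop

theorem concreteDensity_pos {K : ℕ} [NeZero K] {β x : Fin K → ℝ} (hβ : ∀ i, 0 < β i) (hτ : 0 < τ)
    (hx : ∀ i, 0 < x i) : 0 < concreteDensity K β τ x := by
  have hterm (s : ℝ) (i : Fin K) : 0 < β i / x i ^ s :=
    div_pos (hβ i) (Real.rpow_pos_of_pos (hx i) s)
  have hsum := Real.rpow_pos_of_pos (sum_pos (fun j _ ↦ hterm τ j) univ_nonempty) (-(K : ℝ))
  have hprod := prod_pos fun i (_ : i ∈ univ) ↦ hterm (τ + 1) i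
  unfold concreteDensity
  positivity

theorem concreteDensity_smul {K : ℕ} (β : Fin K → ℝ) {c : ℝ} (hc : 0 < c) {x : Fin K → ℝ}
    (hx : ∀ i, 0 ≤ x i) :
    concreteDensity K β τ (c • x) = (c ^ K)⁻¹ * concreteDensity K β τ x := by
  have hterm (s : ℝ) (i : Fin K) : β i / (c • x) i ^ s = (c ^ s)⁻¹ * (β i / x i ^ s) := by
    rw [Pi.smul_apply, smul_eq_mul, Real.mul_rpow hc.le (hx i), div_mul_eq_div_div_swap,
      inv_mul_eq_div]
  simp only [concreteDensity, hterm, ← mul_sum, prod_mul_distrib, prod_const, card_univ,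
    Fintype.card_fin, Real.rpow_neg_natCast, zpow_neg, zpow_natCast, mul_pow, mul_inv, inv_pow,
    inv_inv, Real.rpow_add_one hc.ne']
  have := (Real.rpow_pos_of_pos hc τ).ne'
  field_simp

theorem prod_softmax_mul_concreteDensity_softmax {K : ℕ} (β w : Fin K → ℝ) :
    (∏ i, softmax w i) * concreteDensity K β τ (softmax w) =
      (∏ i, Real.exp (w i)) * concreteDensity K β τ fun i ↦ Real.exp (w i) := by
  obtain rfl | _ := K.eq_zero_or_pos
  · simp [concreteDensity]
  have : NeZero K := ⟨by lia⟩
  have hZ := sum_exp_pos w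
  have hsmul : softmax w = (∑ j, Real.exp (w j))⁻¹ • fun i ↦ Real.exp (w i) :=
    funext fun i ↦ div_eq_inv_mul _ _
  rw [hsmul, concreteDensity_smul β (inv_pos.mpr hZ) fun i ↦ (Real.exp_pos _).le]
  simp only [Pi.smul_apply, smul_eq_mul, prod_mul_distrib, prod_const, card_univ, Fintype.card_fin]
  field_simp

theorem prod_exp_mul_concreteDensity_exp {K : ℕ} (β w : Fin K → ℝ) :
    (∏ i, Real.exp (w i)) * concreteDensity K β τ (fun i ↦ Real.exp (w i)) =
      (K - 1).factorial * τ ^ (K - 1) * (∏ i, β i * Real.exp (-τ * w i)) *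
        (1 / ∑ i, β i * Real.exp (-τ * w i)) ^ K := by
  have hterm (i : Fin K) : β i / Real.exp (w i) ^ τ = β i * Real.exp (-τ * w i) := by
    rw [← Real.exp_mul, div_eq_mul_inv, ← Real.exp_neg, mul_comm (w i), neg_mul]
  simp only [concreteDensity, Real.rpow_add_one (Real.exp_pos _).ne', ← div_div, hterm,
    prod_div_distrib, Real.rpow_neg_natCast, zpow_neg, zpow_natCast, one_div, inv_pow]
  have hprod := (prod_pos fun i (_ : i ∈ univ) ↦ Real.exp_pos (w i)).ne'
  field_simp

theorem prod_gumbelPDFReal_add (β w : Fin (n + 1) → ℝ) (s : ℝ) :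
    ∏ i, gumbelPDFReal (β i) τ (w i + s) =
      τ ^ n * (∏ i, β i * Real.exp (-τ * w i)) *
        (τ * Real.exp ((n + 1) * (-τ * s) -
          (∑ i, β i * Real.exp (-τ * w i)) * Real.exp (-τ * s))) := by
  have hterm (i : Fin (n + 1)) : gumbelPDFReal (β i) τ (w i + s) =
      τ * (β i * Real.exp (-τ * w i)) *
        Real.exp (-τ * s - β i * Real.exp (-τ * w i) * Real.exp (-τ * s)) := by
    simp only [gumbelPDFReal, mul_add, add_sub_assoc, Real.exp_add, mul_assoc]
    ring_nf
  simp only [hterm, prod_mul_distrib, ← Real.exp_sum, sum_sub_distrib, ← sum_mul, sum_const,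
    prod_const, card_univ, Fintype.card_fin, nsmul_eq_mul, Nat.cast_succ]
  ring_nf

theorem integral_prod_gumbelPDFReal_add (hτ : 0 < τ) {β : Fin (n + 1) → ℝ} (hβ : ∀ i, 0 < β i)
    (w : Fin (n + 1) → ℝ) :
    ∫ s, ∏ i, gumbelPDFReal (β i) τ (w i + s) =
      (∏ i, softmax w i) * concreteDensity (n + 1) β τ (softmax w) := by
  have hrate : 0 < ∑ i, β i * Real.exp (-τ * w i) :=
    sum_pos (fun i _ ↦ mul_pos (hβ i) (Real.exp_pos _)) univ_nonempty
  simp only [prod_gumbelPDFReal_add]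
  rw [integral_const_mul, integral_mul_exp_neg_mul_sub_mul_exp_neg_mul hτ n.cast_add_one_pos hrate,
    Real.Gamma_nat_eq_factorial, prod_softmax_mul_concreteDensity_softmax,
    prod_exp_mul_concreteDensity_exp, ← Nat.cast_add_one, Real.rpow_natCast, Nat.add_sub_cancel]
  ring

theorem lintegral_prod_gumbelPDFReal_add (hτ : 0 < τ) {β : Fin (n + 1) → ℝ}
    (hβ : ∀ i, 0 < β i) (w : Fin (n + 1) → ℝ) :
    ∫⁻ s, ENNReal.ofReal (∏ i, gumbelPDFReal (β i) τ (w i + s)) =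
      ENNReal.ofReal ((∏ i, softmax w i) * concreteDensity (n + 1) β τ (softmax w)) := by
  have hpos : 0 < (∏ i, softmax w i) * concreteDensity (n + 1) β τ (softmax w) :=
    mul_pos (prod_pos fun i _ ↦ softmax_pos w i) (concreteDensity_pos hβ hτ (softmax_pos w))
  rw [← integral_prod_gumbelPDFReal_add hτ hβ, ofReal_integral_eq_lintegral_ofReal]
  · exact Integrable.of_integral_ne_zero (integral_prod_gumbelPDFReal_add hτ hβ w ▸ hpos.ne')
  · exact ae_of_all _ fun s ↦ prod_nonneg fun i _ ↦ gumbelPDFReal_nonneg (hβ i).le hτ.le _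

/-- The Concrete distribution `C(β, τ)` as a measure on the ambient space `Fin K → ℝ`. -/
noncomputable def concreteMeasure (K : ℕ) (β : Fin K → ℝ) (τ : ℝ) : Measure (Fin K → ℝ) :=
  (simplexMeasure K).withDensity fun x ↦ ENNReal.ofReal (concreteDensity K β τ x)

theorem map_softmax_pi_gumbelMeasure (hτ : 0 < τ) {β : Fin (n + 1) → ℝ} (hβ : ∀ i, 0 < β i) :
    (Measure.pi fun i ↦ gumbelMeasure (β i) τ).map softmax = concreteMeasure (n + 1) β τ := by
  have hpdf : Measurable fun w : Fin (n + 1) → ℝ ↦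
      ENNReal.ofReal (∏ i, gumbelPDFReal (β i) τ (w i)) := by fun_prop
  have hdens := (measurable_concreteDensity (n + 1) β τ).ennreal_ofReal
  have hsoftmax := measurable_softmax_snoc_zero (n := n)
  have hjac : Measurable fun v : Fin n → ℝ ↦
      ENNReal.ofReal (∏ i, softmax (Fin.snoc (α := fun _ ↦ ℝ) v 0) i) := by fun_prop
  refine Measure.ext_of_lintegral _ fun h hh ↦ ?_
  have hhs : Measurable fun w ↦ h (softmax w) := hh.comp measurable_softmax
  unfold gumbelMeasure
  rw [lintegral_map hh measurable_softmax, pi_withDensity_ofReal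
      (fun i ↦ integrable_gumbelPDFReal (hβ i) hτ) (fun i ↦ gumbelPDFReal_nonneg (hβ i).le hτ.le),
    lintegral_withDensity_eq_lintegral_mul _ hpdf hhs, ← volume_pi,
    lintegral_eq_lintegral_snoc_zero_add (hpdf.mul hhs), concreteMeasure,
    lintegral_withDensity_eq_lintegral_mul _ hdens hh, simplexMeasure_succ_eq_map_softmax,
    lintegral_map (hdens.mul hh) hsoftmax]
  refine Eq.trans ?_
    (lintegral_withDensity_eq_lintegral_mul _ hjac ((hdens.mul hh).comp hsoftmax)).symm
  refine lintegral_congr fun v ↦ ?_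
  simp only [Pi.mul_apply, Function.comp_apply, softmax_add_const]
  rw [lintegral_mul_const _ (by fun_prop), lintegral_prod_gumbelPDFReal_add hτ hβ,
    ENNReal.ofReal_mul (prod_nonneg fun i _ ↦ (softmax_pos _ i).le), mul_assoc]

theorem integral_mul_concreteDensity (hτ : 0 < τ) {β : Fin (n + 1) → ℝ} (hβ : ∀ i, 0 < β i)
    {φ : (Fin (n + 1) → ℝ) → ℝ} (hφ : Measurable φ) :
    ∫ x, φ x * concreteDensity (n + 1) β τ x ∂simplexMeasure (n + 1) =
      ∫ w, φ (softmax w) ∂Measure.pi fun i ↦ gumbelMeasure (β i) τ := by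
  rw [← integral_map measurable_softmax.aemeasurable hφ.aestronglyMeasurable,
    map_softmax_pi_gumbelMeasure hτ hβ, concreteMeasure,
    integral_withDensity_eq_integral_toReal_smul
      (measurable_concreteDensity (n + 1) β τ).ennreal_ofReal (by simp)]
  refine integral_congr_ae ?_
  filter_upwards [ae_pos_simplexMeasure_succ] with x hx
  rw [ENNReal.toReal_ofReal (concreteDensity_pos hβ hτ hx).le, smul_eq_mul, mul_comm]

theorem memLp_eval_pi_gumbelMeasure {K : ℕ} (hτ : 0 < τ) {β : Fin K → ℝ} (hβ : ∀ i, 0 < β i)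
    (i : Fin K) : MemLp (fun w ↦ w i) 2 (Measure.pi fun i ↦ gumbelMeasure (β i) τ) := by
  have hprob (i : Fin K) := isProbabilityMeasure_gumbelMeasure (hβ i) hτ
  exact memLp_eval_pi (memLp_id_gumbelMeasure (hβ i) hτ 2)

theorem covariance_eval_pi_gumbelMeasure {K : ℕ} (hτ : 0 < τ) {β : Fin K → ℝ} (hβ : ∀ i, 0 < β i)
    (i j : Fin K) :
    cov[fun w ↦ w i, fun w ↦ w j; Measure.pi fun i ↦ gumbelMeasure (β i) τ] =
      Real.pi ^ 2 / (6 * τ ^ 2) * kd i j := by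
  have hprob (i : Fin K) := isProbabilityMeasure_gumbelMeasure (hβ i) hτ
  rw [covariance_eval_pi (fun i ↦ memLp_id_gumbelMeasure (hβ i) hτ 2), kd,
    variance_id_gumbelMeasure (hβ i) hτ, mul_ite, mul_one, mul_zero]

theorem covariance_eval_sub_eval_pi_gumbelMeasure {K : ℕ} (hτ : 0 < τ) {β : Fin K → ℝ}
    (hβ : ∀ i, 0 < β i) (i j k l : Fin K) :
    cov[fun w ↦ w i - w k, fun w ↦ w j - w l; Measure.pi fun i ↦ gumbelMeasure (β i) τ] =
      Real.pi ^ 2 / (6 * τ ^ 2) * (kd i j - kd i l - kd j k + kd k l) := by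
  have hprob (i : Fin K) := isProbabilityMeasure_gumbelMeasure (hβ i) hτ
  have hL2 := memLp_eval_pi_gumbelMeasure hτ hβ
  have hsymm : kd k j = kd j k := by simp only [kd, eq_comm]
  rw [covariance_fun_sub_fun_sub (hL2 i) (hL2 k) (hL2 j) (hL2 l)]
  simp only [covariance_eval_pi_gumbelMeasure hτ hβ, hsymm]
  ring

end ConcreteDensity

end

/-- Log-ratio covariances of the Concrete distribution:
`Cov[log(X_i/X_k), log(X_j/X_l)] = (π²/(6τ²))(δ_ij − δ_il − δ_jk + δ_kl)`. -/
theorem concrete_log_ratio_covariance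
    (K : ℕ) (hK : 2 ≤ K) (τ : ℝ) (hτ : 0 < τ)
    (β : Fin K → ℝ) (hβ : ∀ i, 0 < β i) (i j k l : Fin K) :
    (∫ x, Real.log (x i / x k) * Real.log (x j / x l) * concreteDensity K β τ x
        ∂(simplexMeasure K))
      - (∫ x, Real.log (x i / x k) * concreteDensity K β τ x ∂(simplexMeasure K)) *
        (∫ x, Real.log (x j / x l) * concreteDensity K β τ x ∂(simplexMeasure K))
      = (Real.pi ^ 2 / (6 * τ ^ 2)) * (kd i j - kd i l - kd j k + kd k l) := by
  obtain ⟨n, rfl⟩ : ∃ n, K = n + 1 := ⟨K - 1, by lia⟩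
  have hprob (m : Fin (n + 1)) := isProbabilityMeasure_gumbelMeasure (hβ m) hτ
  have hL2 := memLp_eval_pi_gumbelMeasure hτ hβ
  have hcov := ProbabilityTheory.covariance_eq_sub ((hL2 i).sub (hL2 k)) ((hL2 j).sub (hL2 l))
  rw [integral_mul_concreteDensity hτ hβ (by fun_prop),
    integral_mul_concreteDensity hτ hβ (by fun_prop),
    integral_mul_concreteDensity hτ hβ (by fun_prop)]
  simp only [log_softmax_div_softmax]
  exact hcov.symm.trans (covariance_eval_sub_eval_pi_gumbelMeasure hτ hβ i j k l)
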